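/- arXiv:math/0304045 — 2 statements merged into one kernel-verified Lean document; each statement's English description precedes it below -/
import Mathlib

section
/- For every nonzero x ∈ H, the local spectrum of S_u at x^{(0)} is the closed disc σ_{S_u}(x^{(0)}) = {λ ∈ ℂ : |λ| ≤ r_{S_u}(x^{(0)})}. -/
open Filter Topology ENNReal

noncomputable section

/-- The local resolvent set of `T` at `x`. -/
def localResolventSet {E : Type*} [NormedAddCommGroup E] [NormedSpace ℂ E]
    (T : E →L[ℂ] E) (x : E) : Set ℂ :=
  {l : ℂ | ∃ U : Set ℂ, IsOpen U ∧ l ∈ U ∧ ∃ f : ℂ → E, AnalyticOnNhd ℂ f U ∧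
    ∀ m ∈ U, T (f m) - m • f m = x}

/-- The local spectrum of `T` at `x`. -/
def localSpectrum {E : Type*} [NormedAddCommGroup E] [NormedSpace ℂ E]
    (T : E →L[ℂ] E) (x : E) : Set ℂ :=
  (localResolventSet T x)ᶜ

/-- The local spectral radius of `T` at `x`: `limsup ‖Tⁿx‖^{1/n}`. -/
def localSpecRad {E : Type*} [NormedAddCommGroup E] [NormedSpace ℂ E]
    (T : E →L[ℂ] E) (x : E) : ℝ≥0∞ :=
  limsup (fun n : ℕ => (‖(T ^ n) x‖₊ : ℝ≥0∞) ^ (1 / n : ℝ)) atTop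

/-- The lower bound `m(T) = inf {‖Tx‖ : ‖x‖ = 1}` of an operator. -/
def lowerBound {E : Type*} [NormedAddCommGroup E] [NormedSpace ℂ E]
    (T : E →L[ℂ] E) : ℝ :=
  sInf ((fun x => ‖T x‖) '' {x : E | ‖x‖ = 1})

/-- `r₁(T) = lim m(Tⁿ)^{1/n} = sup_{n ≥ 1} m(Tⁿ)^{1/n}`. -/
def r1 {E : Type*} [NormedAddCommGroup E] [NormedSpace ℂ E]
    (T : E →L[ℂ] E) : ℝ≥0∞ :=
  ⨆ n : ℕ, ENNReal.ofReal (lowerBound (T ^ (n + 1))) ^ (1 / (n + 1) : ℝ)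

/-- The point spectrum: the set of eigenvalues. -/
def pointSpectrum {E : Type*} [NormedAddCommGroup E] [NormedSpace ℂ E]
    (T : E →L[ℂ] E) : Set ℂ :=
  {l : ℂ | ∃ x : E, x ≠ 0 ∧ T x = l • x}

/-- The set of points where `T` fails the single-valued extension property. -/
def svepFails {E : Type*} [NormedAddCommGroup E] [NormedSpace ℂ E]
    (T : E →L[ℂ] E) : Set ℂ :=
  {l₀ : ℂ | ¬ ∀ r : ℝ, 0 < r → ∀ f : ℂ → E, AnalyticOnNhd ℂ f (Metric.ball l₀ r) →
      (∀ m ∈ Metric.ball l₀ r, T (f m) - m • f m = 0) →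
      ∀ m ∈ Metric.ball l₀ r, f m = 0}

/-- Dunford's condition (C). -/
def DunfordC {E : Type*} [NormedAddCommGroup E] [NormedSpace ℂ E]
    (T : E →L[ℂ] E) : Prop :=
  ∀ F : Set ℂ, IsClosed F → IsClosed {y : E | localSpectrum T y ⊆ F}

/-- Bishop's property (β). -/
def BishopBeta {E : Type*} [NormedAddCommGroup E] [NormedSpace ℂ E]
    (T : E →L[ℂ] E) : Prop :=
  ∀ U : Set ℂ, IsOpen U → ∀ f : ℕ → ℂ → E,
    (∀ m, AnalyticOnNhd ℂ (f m) U) →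
    TendstoLocallyUniformlyOn (fun m z => T (f m z) - z • f m z) 0 atTop U →
    TendstoLocallyUniformlyOn f 0 atTop U

section Shift

variable {H : Type*} [NormedAddCommGroup H] [InnerProductSpace ℂ H] [CompleteSpace H]

/-- `wB A n = B_n = A_{n-1} ⋯ A_1 A_0`, with `B_0 = 1`. -/
def wB (A : ℕ → (H →L[ℂ] H)ˣ) : ℕ → (H →L[ℂ] H)ˣ
  | 0 => 1
  | n + 1 => A n * wB A n

/-- `wBi A n = B_n⁻¹` as an operator. -/
def wBi (A : ℕ → (H →L[ℂ] H)ˣ) (n : ℕ) : H →L[ℂ] H :=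
  (((wB A n)⁻¹ : (H →L[ℂ] H)ˣ) : H →L[ℂ] H)

/-- `R₂⁺(S_u) = sup_{x ≠ 0} 1 / limsup ‖(B_n*)⁻¹ x‖^{1/n}` (with `1/0 = ∞`). -/
def R2plus (A : ℕ → (H →L[ℂ] H)ˣ) : ℝ≥0∞ :=
  ⨆ (x : H) (_ : x ≠ 0),
    (limsup (fun n : ℕ =>
      (‖ContinuousLinearMap.adjoint (wBi A n) x‖₊ : ℝ≥0∞) ^ (1 / n : ℝ)) atTop)⁻¹

/-- `R₂⁻(S_u) = inf_{x ≠ 0} 1 / limsup ‖(B_n*)⁻¹ x‖^{1/n}` (with `1/0 = ∞`). -/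
def R2minus (A : ℕ → (H →L[ℂ] H)ˣ) : ℝ≥0∞ :=
  ⨅ (x : H) (_ : x ≠ 0),
    (limsup (fun n : ℕ =>
      (‖ContinuousLinearMap.adjoint (wBi A n) x‖₊ : ℝ≥0∞) ^ (1 / n : ℝ)) atTop)⁻¹

/-- `R₃⁺(S_u) = sup_{x ≠ 0} limsup ‖B_n x‖^{1/n}`. -/
def R3plus (A : ℕ → (H →L[ℂ] H)ˣ) : ℝ≥0∞ :=
  ⨆ (x : H) (_ : x ≠ 0),
    limsup (fun n : ℕ => (‖(wB A n : H →L[ℂ] H) x‖₊ : ℝ≥0∞) ^ (1 / n : ℝ)) atTop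

/-- `R₃⁻(S_u) = inf_{x ≠ 0} limsup ‖B_n x‖^{1/n}`. -/
def R3minus (A : ℕ → (H →L[ℂ] H)ˣ) : ℝ≥0∞ :=
  ⨅ (x : H) (_ : x ≠ 0),
    limsup (fun n : ℕ => (‖(wB A n : H →L[ℂ] H) x‖₊ : ℝ≥0∞) ^ (1 / n : ℝ)) atTop

/-- `r₂(S_u) = 1 / limsup ‖B_n⁻¹‖^{1/n}` (with `1/0 = ∞`). -/
def r2 (A : ℕ → (H →L[ℂ] H)ˣ) : ℝ≥0∞ :=
  (limsup (fun n : ℕ => (‖wBi A n‖₊ : ℝ≥0∞) ^ (1 / n : ℝ)) atTop)⁻¹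

/-- `r₃(S_u) = 1 / liminf ‖B_n⁻¹‖^{1/n}` (with `1/0 = ∞`). -/
def r3 (A : ℕ → (H →L[ℂ] H)ˣ) : ℝ≥0∞ :=
  (liminf (fun n : ℕ => (‖wBi A n‖₊ : ℝ≥0∞) ^ (1 / n : ℝ)) atTop)⁻¹

/-- `R_𝒜(x) = 1 / limsup ‖B_n⁻¹ x_n‖^{1/n}` (with `1/0 = ∞`). -/
def RA (A : ℕ → (H →L[ℂ] H)ˣ) (x : lp (fun _ : ℕ => H) 2) : ℝ≥0∞ :=
  (limsup (fun n : ℕ => (‖wBi A n (x n)‖₊ : ℝ≥0∞) ^ (1 / n : ℝ)) atTop)⁻¹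

end Shift

/-! For `‖m‖` greater than the radius `r = limsup ‖Tⁿ x‖ ^ (1/n)`, the Neumann series
`-∑ Tⁿ x / m ^ (n + 1)` solves `(T - m) y = x` and is analytic in `m`, so the local spectrum always
lies in the closed disc of radius `r`. For a weighted shift and `x` supported in coordinate `0`,
reading `(S - m) y = x` coordinatewise forces `m ≠ 0` and makes `Sⁿ x` the vector
`-m ^ (n + 1) yₙ` in coordinate `n`. As `‖yₙ‖ ≤ ‖y‖`, solvability at `m` gives `r ≤ ‖m‖`. Hence the
local spectrum contains `0` and the open disc of radius `r`, and, being closed, the closed disc. -/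

section LocalSpectrum

variable {E : Type*} [NormedAddCommGroup E] [NormedSpace ℂ E] (T : E →L[ℂ] E) (x : E)

theorem isClosed_localSpectrum : IsClosed (localSpectrum T x) := by
  refine ⟨?_⟩
  rw [localSpectrum, compl_compl, isOpen_iff_mem_nhds]
  rintro l ⟨U, hU, hlU, f, hf, hfx⟩
  exact mem_of_superset (hU.mem_nhds hlU) fun m hm => ⟨U, hU, hm, f, hf, hfx⟩

/-- The power series `∑ zⁿ Tⁿ x` of the orbit of `x` under `T`. At `z = m⁻¹` its sum is, up to the
factor `-m⁻¹`, the Neumann series of the local resolvent of `T` at `x`. -/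
def orbitSeries : FormalMultilinearSeries ℂ ℂ E :=
  fun n => ContinuousMultilinearMap.mkPiRing ℂ (Fin n) ((T ^ n) x)

theorem nnnorm_orbitSeries (n : ℕ) : ‖orbitSeries T x n‖₊ = ‖(T ^ n) x‖₊ :=
  NNReal.eq (ContinuousMultilinearMap.norm_mkPiRing _)

theorem orbitSeries_radius : (orbitSeries T x).radius = (localSpecRad T x)⁻¹ := by
  simp only [localSpecRad, ENNReal.inv_limsup, FormalMultilinearSeries.radius_eq_liminf,
    nnnorm_orbitSeries]
  congr 1
  ext n
  rw [one_div, ENNReal.coe_rpow_of_nonneg _ (by positivity)]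

variable {T x}

theorem localSpecRad_le_inv_of_bound {C r : NNReal} (h : ∀ n, ‖(T ^ n) x‖₊ * r ^ n ≤ C) :
    localSpecRad T x ≤ (r : ℝ≥0∞)⁻¹ := by
  rw [ENNReal.le_inv_iff_le_inv, ← orbitSeries_radius]
  exact (orbitSeries T x).le_radius_of_bound_nnreal C fun n => by
    simpa only [nnnorm_orbitSeries] using h n

theorem ne_zero_of_localSpecRad_lt {m : ℂ} (hm : localSpecRad T x < ‖m‖₊) : m ≠ 0 := by
  rintro rfl
  simp at hm

theorem inv_mem_eball_orbitSeries_radius {m : ℂ} (hm : localSpecRad T x < ‖m‖₊) :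
    m⁻¹ ∈ Metric.eball (0 : ℂ) (orbitSeries T x).radius := by
  rw [Metric.mem_eball, edist_zero_right, orbitSeries_radius,
    enorm_inv (ne_zero_of_localSpecRad_lt hm)]
  exact ENNReal.inv_lt_inv.2 hm

variable [CompleteSpace E]

theorem orbitSeries_sum_eq {z : ℂ} (hz : z ∈ Metric.eball (0 : ℂ) (orbitSeries T x).radius) :
    (orbitSeries T x).sum z = x + z • T ((orbitSeries T x).sum z) := by
  have hsum : HasSum (fun n : ℕ => z ^ n • (T ^ n) x) ((orbitSeries T x).sum z) := by
    simpa [orbitSeries] using (orbitSeries T x).hasSum hz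
  have hshift : HasSum (fun n : ℕ => z ^ (n + 1) • (T ^ (n + 1)) x)
      (z • T ((orbitSeries T x).sum z)) := by
    simpa only [map_smul, smul_smul, ← pow_succ', ← mul_apply_eq_comp]
      using (hsum.mapL T).const_smul z
  have hsplit := (hasSum_nat_add_iff' 1).2 hsum
  simpa [sub_eq_iff_eq_add'] using hsplit.unique hshift

theorem mem_localResolventSet_of_localSpecRad_lt {l : ℂ} (hl : localSpecRad T x < ‖l‖₊) :
    l ∈ localResolventSet T x := by
  refine ⟨{m | localSpecRad T x < ‖m‖₊}, isOpen_lt continuous_const (by fun_prop), hl,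
    fun m => -(m⁻¹ • (orbitSeries T x).sum m⁻¹), fun m hm => ?_, fun m hm => ?_⟩
  · have hball := inv_mem_eball_orbitSeries_radius hm
    have hinv : AnalyticAt ℂ (fun m : ℂ => m⁻¹) m :=
      analyticAt_id.inv (ne_zero_of_localSpecRad_lt hm)
    have hsum : AnalyticAt ℂ (orbitSeries T x).sum m⁻¹ :=
      ((orbitSeries T x).hasFPowerSeriesOnBall (pos_of_gt hball)).analyticAt_of_mem hball
    exact (hinv.smul (hsum.fun_comp hinv)).neg
  · have hfix := orbitSeries_sum_eq (inv_mem_eball_orbitSeries_radius hm)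
    rw [map_neg, map_smul, smul_neg, smul_inv_smul₀ (ne_zero_of_localSpecRad_lt hm), sub_neg_eq_add,
      neg_add_eq_iff_eq_add, add_comm]
    exact hfix

variable (T x) in
theorem localSpectrum_subset_setOf_nnnorm_le :
    localSpectrum T x ⊆ {l : ℂ | (‖l‖₊ : ℝ≥0∞) ≤ localSpecRad T x} := fun _ hl =>
  not_lt.1 fun hlt => hl (mem_localResolventSet_of_localSpecRad_lt hlt)

end LocalSpectrum

section WeightedShift

variable {E : ℕ → Type*} [∀ n, NormedAddCommGroup (E n)] [∀ n, NormedSpace ℂ (E n)]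
  {p : ℝ≥0∞} [Fact (1 ≤ p)]

/-- `S` is the unilateral operator weighted shift `(x₀, x₁, …) ↦ (0, A₀ x₀, A₁ x₁, …)` on the
`ℓᵖ`-direct sum of the spaces `E n`, described coordinatewise. -/
structure IsWeightedShift (A : ∀ n, E n →L[ℂ] E (n + 1)) (S : lp E p →L[ℂ] lp E p) : Prop where
  apply_zero : ∀ y : lp E p, S y 0 = 0
  apply_succ : ∀ (y : lp E p) (n : ℕ), S y (n + 1) = A n (y n)

namespace IsWeightedShift

variable {A : ∀ n, E n →L[ℂ] E (n + 1)} {S : lp E p →L[ℂ] lp E p} {x : E 0} {m : ℂ} {y : lp E p}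

theorem apply_single (hS : IsWeightedShift A S) (n : ℕ) (z : E n) :
    S (lp.single p n z) = lp.single p (n + 1) (A n z) := by
  ext k
  rcases k with _ | k
  · rw [hS.apply_zero, lp.single_apply_ne _ _ _ n.succ_ne_zero.symm]
  rw [hS.apply_succ]
  obtain rfl | hk := eq_or_ne k n
  · rw [lp.single_apply_self, lp.single_apply_self]
  · rw [lp.single_apply_ne _ _ _ hk, lp.single_apply_ne _ _ _ (Nat.succ_ne_succ_iff.2 hk), map_zero]

theorem neg_smul_coord_zero (hS : IsWeightedShift A S)
    (hy : S y - m • y = lp.single p 0 x) : -(m • y 0) = x := by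
  have hcoord : S y 0 - m • y 0 = lp.single p 0 x 0 := congr($hy 0)
  rwa [hS.apply_zero, lp.single_apply_self, zero_sub] at hcoord

theorem weight_apply_coord (hS : IsWeightedShift A S)
    (hy : S y - m • y = lp.single p 0 x) (n : ℕ) : A n (y n) = m • y (n + 1) := by
  have hcoord : S y (n + 1) - m • y (n + 1) = lp.single p 0 x (n + 1) := congr($hy (n + 1))
  rwa [hS.apply_succ, lp.single_apply_ne _ _ _ n.succ_ne_zero, sub_eq_zero] at hcoord

theorem pow_apply_single_zero (hS : IsWeightedShift A S)
    (hy : S y - m • y = lp.single p 0 x) (n : ℕ) :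
    (S ^ n) (lp.single p 0 x) = lp.single p n (-(m ^ (n + 1) • y n)) := by
  induction n with
  | zero => simp [hS.neg_smul_coord_zero hy]
  | succ n ih =>
    rw [pow_succ', mul_apply_eq_comp, ih, hS.apply_single, map_neg, map_smul,
      hS.weight_apply_coord hy, smul_smul, ← pow_succ]

theorem nnnorm_pow_apply_single_zero (hS : IsWeightedShift A S)
    (hy : S y - m • y = lp.single p 0 x) (n : ℕ) :
    ‖(S ^ n) (lp.single p 0 x)‖₊ = ‖m‖₊ ^ (n + 1) * ‖y n‖₊ := by
  have hp : 0 < p := zero_lt_one.trans_le Fact.out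
  apply NNReal.eq
  simp only [hS.pow_apply_single_zero hy, coe_nnnorm, lp.norm_single hp, norm_neg, norm_smul,
    norm_pow, NNReal.coe_mul, NNReal.coe_pow]

theorem ne_zero_of_sub_smul_eq_single (hS : IsWeightedShift A S) (hx : x ≠ 0)
    (hy : S y - m • y = lp.single p 0 x) : m ≠ 0 := by
  rintro rfl
  exact hx (by simpa using (hS.neg_smul_coord_zero hy).symm)

theorem localSpecRad_le_of_sub_smul_eq_single (hS : IsWeightedShift A S) (hx : x ≠ 0)
    (hy : S y - m • y = lp.single p 0 x) : localSpecRad S (lp.single p 0 x) ≤ ‖m‖₊ := by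
  have hm : ‖m‖₊ ≠ 0 := nnnorm_ne_zero_iff.2 (hS.ne_zero_of_sub_smul_eq_single hx hy)
  have hp : p ≠ 0 := (zero_lt_one.trans_le Fact.out).ne'
  have hbound (n : ℕ) :
      ‖(S ^ n) (lp.single p 0 x)‖₊ * ‖m‖₊⁻¹ ^ n ≤ ‖m‖₊ * ‖y‖₊ :=
    calc ‖(S ^ n) (lp.single p 0 x)‖₊ * ‖m‖₊⁻¹ ^ n
      _ = ‖m‖₊ * ‖y n‖₊ := by
        rw [hS.nnnorm_pow_apply_single_zero hy, pow_succ', inv_pow]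
        field_simp
      _ ≤ ‖m‖₊ * ‖y‖₊ := by gcongr; exact lp.norm_apply_le_norm hp y n
  simpa only [ENNReal.coe_inv hm, inv_inv] using localSpecRad_le_inv_of_bound hbound

theorem zero_mem_localSpectrum (hS : IsWeightedShift A S) (hx : x ≠ 0) :
    0 ∈ localSpectrum S (lp.single p 0 x) := by
  rintro ⟨U, -, h0, f, -, hf⟩
  exact hS.ne_zero_of_sub_smul_eq_single hx (hf 0 h0) rfl

theorem mem_localSpectrum_of_nnnorm_lt (hS : IsWeightedShift A S) (hx : x ≠ 0)
    (hm : ‖m‖₊ < localSpecRad S (lp.single p 0 x)) : m ∈ localSpectrum S (lp.single p 0 x) := by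
  rintro ⟨U, -, hmU, f, -, hf⟩
  exact hm.not_ge (hS.localSpecRad_le_of_sub_smul_eq_single hx (hf m hmU))

theorem mem_localSpectrum_of_nnnorm_le (hS : IsWeightedShift A S) (hx : x ≠ 0)
    (hm : ‖m‖₊ ≤ localSpecRad S (lp.single p 0 x)) : m ∈ localSpectrum S (lp.single p 0 x) := by
  obtain rfl | hm0 := eq_or_ne m 0
  · exact hS.zero_mem_localSpectrum hx
  have hball : Metric.ball 0 ‖m‖ ⊆ localSpectrum S (lp.single p 0 x) := fun z hz =>
    hS.mem_localSpectrum_of_nnnorm_lt hx <|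
      (ENNReal.coe_lt_coe.2 (mem_ball_zero_iff.1 hz)).trans_le hm
  apply (isClosed_localSpectrum S _).closure_subset_iff.2 hball
  rw [closure_ball 0 (norm_ne_zero_iff.2 hm0)]
  exact mem_closedBall_zero_iff.2 le_rfl

end IsWeightedShift

theorem stmt15_general [∀ n, CompleteSpace (E n)] {A : ∀ n, E n →L[ℂ] E (n + 1)}
    {S : lp E p →L[ℂ] lp E p} (hS : IsWeightedShift A S) {x : E 0} (hx : x ≠ 0) :
    localSpectrum S (lp.single p 0 x) =
      {l : ℂ | (‖l‖₊ : ℝ≥0∞) ≤ localSpecRad S (lp.single p 0 x)} :=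
  (localSpectrum_subset_setOf_nnnorm_le S _).antisymm
    fun _ hl => hS.mem_localSpectrum_of_nnnorm_le hx hl

end WeightedShift

theorem stmt15 {H : Type*} [NormedAddCommGroup H] [InnerProductSpace ℂ H] [CompleteSpace H]
    (A : ℕ → (H →L[ℂ] H)ˣ)
    (hbdd : ∃ C : ℝ, ∀ n, ‖(A n : H →L[ℂ] H)‖ ≤ C)
    (S : lp (fun _ : ℕ => H) 2 →L[ℂ] lp (fun _ : ℕ => H) 2)
    (hS0 : ∀ x : lp (fun _ : ℕ => H) 2, S x 0 = 0)
    (hS : ∀ (x : lp (fun _ : ℕ => H) 2) (n : ℕ), S x (n + 1) = (A n : H →L[ℂ] H) (x n)) :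
    ∀ x : H, x ≠ 0 →
      localSpectrum S (lp.single 2 0 x) =
        {l : ℂ | (‖l‖₊ : ℝ≥0∞) ≤ localSpecRad S (lp.single 2 0 x)} := by
  intro x hx
  exact stmt15_general (A := fun n => (A n : H →L[ℂ] H)) ⟨hS0, hS⟩ hx
end
end

section
/- Let x be a nonzero element of H and let y be a nonzero element of Ĥ(x). If R_A(y) ≤ r_{S_u}(x^{(0)}), then the closed disc {λ ∈ ℂ : |λ| ≤ R_A(y)} is contained in σ_{S_u}(y). -/
open Filter Topology ENNReal

noncomputable section

/-!
For the shift `T = S_u` and `z = x^{(0)}`, the bounded sequence of coordinate projections `π n`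
satisfies `π 0 T = 0` and `π (n + 1) T = T π n`, and `y ∈ Ĥ(x)` means `π n y = a n • Tⁿ z`.
Reading `T g - m • g = y` coordinate by coordinate gives
`m ^ (n + 1) • π n g = -(∑_{k ≤ n} a k * m ^ k) • Tⁿ z`.

Let `R` be the radius of convergence of the nonzero power series with coefficients `a`. Near any
`l ≠ 0` with `‖l‖ ≤ R` there is an `m` with `‖m‖ < R` at which its sum does not vanish, so that the
partial sums at `m` stay away from zero. A solution `g` for this `m` would then force
`‖Tⁿ z‖ = O(‖m‖ⁿ)`, hence `r_T(z) ≤ ‖m‖ < R`.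

The point `l = 0` needs another argument, because `R` may vanish: if `n` is minimal with
`π n y ≠ 0`, a local solution `f` satisfies `m • π n (f m) = -π n y` for `m ≠ 0`, and letting
`m → 0` gives `π n y = 0`.
-/

theorem limsup_rpow_one_div_le_of_eventually_le {u : ℕ → ℝ≥0∞} {K : ℝ≥0∞} {q : NNReal}
    (hK : K ≠ ∞) (h : ∀ᶠ n in atTop, u n ≤ K * q ^ n) :
    limsup (fun n : ℕ => u n ^ (1 / n : ℝ)) atTop ≤ q := by
  have root_le : ∀ᶠ n : ℕ in atTop, u n ^ (1 / n : ℝ) ≤ K ^ (1 / n : ℝ) * q := by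
    filter_upwards [h, eventually_ne_atTop 0] with n hn hn0
    calc u n ^ (1 / n : ℝ) ≤ (K * q ^ n) ^ (1 / n : ℝ) := by gcongr
      _ = K ^ (1 / n : ℝ) * q := by
        rw [ENNReal.mul_rpow_of_nonneg _ _ (by positivity), one_div,
          ENNReal.pow_rpow_inv_natCast hn0]
  have limsup_root_K : limsup (fun n : ℕ => K ^ (1 / n : ℝ)) atTop ≤ 1 :=
    le_of_forall_gt_imp_ge_of_dense fun _ hy =>
      limsup_le_of_le (h := ENNReal.eventually_pow_one_div_le hK hy)
  calc limsup (fun n : ℕ => u n ^ (1 / n : ℝ)) atTop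
      ≤ limsup (fun n : ℕ => K ^ (1 / n : ℝ) * q) atTop := limsup_le_limsup root_le
    _ ≤ limsup (fun n : ℕ => K ^ (1 / n : ℝ)) atTop * limsup (fun _ : ℕ => (q : ℝ≥0∞)) atTop :=
      ENNReal.limsup_mul_le' (.inr (by simp))
        (.inl (limsup_root_K.trans_lt ENNReal.one_lt_top).ne)
    _ ≤ q := by
      rw [limsup_const]
      exact mul_le_of_le_one_left' limsup_root_K

theorem radius_eq_inv_limsup {𝕜 E F : Type*} [NontriviallyNormedField 𝕜]
    [NormedAddCommGroup E] [NormedSpace 𝕜 E] [NormedAddCommGroup F] [NormedSpace 𝕜 F]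
    (P : FormalMultilinearSeries 𝕜 E F) :
    P.radius = (limsup (fun n : ℕ => (‖P n‖₊ : ℝ≥0∞) ^ (1 / n : ℝ)) atTop)⁻¹ := by
  rw [P.radius_eq_liminf, ENNReal.inv_limsup]
  congr! 2 with n
  rw [one_div, ENNReal.coe_rpow_of_nonneg _ (by positivity)]

theorem radius_ofScalars_eq_inv_limsup_nnnorm_smul {𝕜 E : Type*} [RCLike 𝕜]
    [NormedAddCommGroup E] [NormedSpace 𝕜 E] (a : ℕ → 𝕜) {x : E} (hx : x ≠ 0) :
    (FormalMultilinearSeries.ofScalars 𝕜 a).radius =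
      (limsup (fun n : ℕ => (‖a n • x‖₊ : ℝ≥0∞) ^ (1 / n : ℝ)) atTop)⁻¹ := by
  have hc : (‖x‖ : 𝕜) ≠ 0 := by simpa using hx
  rw [← FormalMultilinearSeries.radius_smul_eq _ hc, radius_eq_inv_limsup]
  congr! 5 with n
  ext
  simp [norm_smul, mul_comm]

theorem exists_mem_sum_ne_zero {𝕜 F : Type*} [RCLike 𝕜] [NormedAddCommGroup F]
    [NormedSpace 𝕜 F] [CompleteSpace F] {P : FormalMultilinearSeries 𝕜 𝕜 F} (hP : P ≠ 0)
    {U : Set 𝕜} (hU : IsOpen U) (hne : (U ∩ Metric.eball 0 P.radius).Nonempty) :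
    ∃ m ∈ U ∩ Metric.eball 0 P.radius, P.sum m ≠ 0 := by
  by_contra! hzero
  obtain ⟨w, hwU, hw⟩ := hne
  have hR : 0 < P.radius := pos_of_gt hw
  have hsum := P.hasFPowerSeriesOnBall hR
  have eventually_zero : P.sum =ᶠ[𝓝 w] 0 :=
    eventually_of_mem ((hU.inter Metric.isOpen_eball).mem_nhds ⟨hwU, hw⟩) hzero
  have eqOn_zero : Set.EqOn P.sum 0 (Metric.eball 0 P.radius) := by
    let := NormedSpace.restrictScalars ℝ 𝕜 𝕜
    exact hsum.analyticOnNhd.eqOn_zero_of_preconnected_of_eventuallyEq_zero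
      Metric.isPreconnected_eball hw eventually_zero
  exact hP (hsum.hasFPowerSeriesAt.congr
    (eqOn_zero.eventuallyEq_of_mem (Metric.eball_mem_nhds 0 hR))).eq_zero

theorem tendsto_sum_range_ofScalars {𝕜 : Type*} [NontriviallyNormedField 𝕜] [CompleteSpace 𝕜]
    {a : ℕ → 𝕜} {m : 𝕜}
    (hm : m ∈ Metric.eball 0 (FormalMultilinearSeries.ofScalars 𝕜 a).radius) :
    Tendsto (fun n => ∑ k ∈ Finset.range n, a k * m ^ k) atTop
      (𝓝 ((FormalMultilinearSeries.ofScalars 𝕜 a).sum m)) := by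
  simpa [FormalMultilinearSeries.ofScalars_apply_eq, mul_comm] using
    (FormalMultilinearSeries.hasSum _ hm).tendsto_sum_nat

/-- The operator `T` is a unilateral shift with respect to the coordinate operators `π n`: it moves
the `n`-th coordinate to the `(n + 1)`-st one and leaves nothing in the zeroth. The `π n` are
neither assumed to be projections nor to determine a vector. -/
structure IsShiftAlong {𝕜 E : Type*} [NontriviallyNormedField 𝕜] [NormedAddCommGroup E]
    [NormedSpace 𝕜 E] (T : E →L[𝕜] E) (π : ℕ → E →L[𝕜] E) : Prop where
  coord_zero (w : E) : π 0 (T w) = 0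
  coord_succ (n : ℕ) (w : E) : π (n + 1) (T w) = T (π n w)
  bddAbove_norm_coord (w : E) : BddAbove (Set.range fun n => ‖π n w‖)

namespace IsShiftAlong

section Recursion

variable {𝕜 E : Type*} [NontriviallyNormedField 𝕜] [NormedAddCommGroup E] [NormedSpace 𝕜 E]
  {T : E →L[𝕜] E} {π : ℕ → E →L[𝕜] E} {m : 𝕜} {g y z : E} {a : ℕ → 𝕜}

theorem pow_succ_smul_coord (h : IsShiftAlong T π) (hg : T g - m • g = y) (n : ℕ) :
    m ^ (n + 1) • π n g = -∑ k ∈ Finset.range (n + 1), m ^ k • (T ^ (n - k)) (π k y) := by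
  induction n with
  | zero => simp [← hg, h.coord_zero]
  | succ n ih =>
    have step : m • π (n + 1) g = T (π n g) - π (n + 1) y := by
      rw [← hg, map_sub, map_smul, h.coord_succ]
      abel
    have apply_T : ∀ k ∈ Finset.range (n + 1),
        m ^ k • (T ^ (n + 1 - k)) (π k y) = T (m ^ k • (T ^ (n - k)) (π k y)) := fun k hk => by
      rw [Nat.succ_sub (Finset.mem_range_succ_iff.1 hk), pow_succ', map_smul]
      rfl
    rw [pow_succ, mul_smul, step, smul_sub, ← map_smul, ih, map_neg, map_sum,
      Finset.sum_range_succ _ (n + 1), Finset.sum_congr rfl apply_T]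
    simp [sub_eq_add_neg, add_comm]

theorem pow_succ_smul_coord_of_coord_eq_smul (h : IsShiftAlong T π)
    (hy : ∀ n, π n y = a n • (T ^ n) z) (hg : T g - m • g = y) (n : ℕ) :
    m ^ (n + 1) • π n g = -((∑ k ∈ Finset.range (n + 1), a k * m ^ k) • (T ^ n) z) := by
  rw [h.pow_succ_smul_coord hg, Finset.sum_smul]
  congr 1
  refine Finset.sum_congr rfl fun k hk => ?_
  have pow_comp : (T ^ (n - k)) ((T ^ k) z) = (T ^ n) z := by
    rw [← mul_apply_eq_comp, ← pow_add,
      Nat.sub_add_cancel (Finset.mem_range_succ_iff.1 hk)]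
  rw [hy, map_smul, pow_comp, smul_smul, mul_comm]

end Recursion

variable {E : Type*} [NormedAddCommGroup E] [NormedSpace ℂ E]
  {T : E →L[ℂ] E} {π : ℕ → E →L[ℂ] E} {m : ℂ} {g y z : E} {a : ℕ → ℂ}

theorem zero_mem_localSpectrum (h : IsShiftAlong T π) (hy : ∃ n, π n y ≠ 0) :
    0 ∈ localSpectrum T y := by
  classical
  rintro ⟨U, hU, h0U, f, hf, hfy⟩
  set n := Nat.find hy
  have coord_lt (k : ℕ) (hk : k < n) : π k y = 0 := not_not.1 (Nat.find_min hy hk)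
  have eq_punctured : (fun m => m • π n (f m)) =ᶠ[𝓝[≠] 0] fun _ => -π n y := by
    filter_upwards [self_mem_nhdsWithin, mem_nhdsWithin_of_mem_nhds (hU.mem_nhds h0U)]
      with m hm hmU
    have hrec := h.pow_succ_smul_coord (hfy m hmU) n
    rw [Finset.sum_range_succ, Finset.sum_eq_zero fun k hk => by
      rw [coord_lt k (Finset.mem_range.1 hk), map_zero, smul_zero]] at hrec
    refine smul_right_injective E (pow_ne_zero n hm) ?_
    simpa [pow_succ, mul_smul] using hrec
  have continuousAt_lhs : ContinuousAt (fun m => m • π n (f m)) 0 :=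
    continuousAt_id.smul ((π n).continuous.continuousAt.comp (hf 0 h0U).continuousAt)
  have eq_nhds := (continuousAt_lhs.eventuallyEq_nhds_iff_eventuallyEq_nhdsNE
    continuousAt_const).1 eq_punctured
  exact Nat.find_spec hy (by simpa using eq_nhds.eq_of_nhds.symm)

theorem localSpecRad_le_of_tendsto (h : IsShiftAlong T π)
    (hy : ∀ n, π n y = a n • (T ^ n) z) (hg : T g - m • g = y) {c : ℂ} (hc : c ≠ 0)
    (hlim : Tendsto (fun n => ∑ k ∈ Finset.range n, a k * m ^ k) atTop (𝓝 c)) :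
    localSpecRad T z ≤ ‖m‖₊ := by
  obtain ⟨C, hC⟩ := h.bddAbove_norm_coord g
  have hCg (n : ℕ) : ‖π n g‖ ≤ C := hC ⟨n, rfl⟩
  have hc' : 0 < ‖c‖ := norm_pos_iff.2 hc
  have norm_le : ∀ᶠ n in atTop, ‖(T ^ n) z‖ ≤ ‖m‖ * C / (‖c‖ / 2) * ‖m‖ ^ n := by
    filter_upwards [(hlim.comp (tendsto_add_atTop_nat 1)).norm.eventually_const_le
      (half_lt_self hc')] with n hn
    rw [div_mul_eq_mul_div, le_div_iff₀ (by positivity)]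
    calc ‖(T ^ n) z‖ * (‖c‖ / 2)
        ≤ ‖(T ^ n) z‖ * ‖∑ k ∈ Finset.range (n + 1), a k * m ^ k‖ := by gcongr; exact hn
      _ = ‖m ^ (n + 1) • π n g‖ := by
        rw [h.pow_succ_smul_coord_of_coord_eq_smul hy hg, norm_neg, norm_smul, mul_comm]
      _ = ‖m‖ ^ (n + 1) * ‖π n g‖ := by rw [norm_smul, norm_pow]
      _ ≤ ‖m‖ ^ (n + 1) * C := by gcongr; exact hCg n
      _ = ‖m‖ * C * ‖m‖ ^ n := by ring
  refine limsup_rpow_one_div_le_of_eventually_le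
    (K := ENNReal.ofReal (‖m‖ * C / (‖c‖ / 2))) ENNReal.ofReal_ne_top ?_
  filter_upwards [norm_le] with n hn
  rw [← enorm_eq_nnnorm, ← enorm_eq_nnnorm, ← ofReal_norm, ← ofReal_norm,
    ← ENNReal.ofReal_pow (norm_nonneg m), ← ENNReal.ofReal_mul' (by positivity)]
  exact ENNReal.ofReal_le_ofReal hn

end IsShiftAlong

theorem stmt17_general {E : Type*} [NormedAddCommGroup E] [NormedSpace ℂ E]
    {T : E →L[ℂ] E} {π : ℕ → E →L[ℂ] E} (h : IsShiftAlong T π) {y z : E} {a : ℕ → ℂ}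
    (hy : ∀ n, π n y = a n • (T ^ n) z) (hy0 : ∃ n, π n y ≠ 0)
    (hR : (FormalMultilinearSeries.ofScalars ℂ a).radius ≤ localSpecRad T z) :
    {l : ℂ | (‖l‖₊ : ℝ≥0∞) ≤ (FormalMultilinearSeries.ofScalars ℂ a).radius} ⊆
      localSpectrum T y := by
  intro l hl
  rcases eq_or_ne l 0 with rfl | hl0
  · exact h.zero_mem_localSpectrum hy0
  rintro ⟨U, hU, hlU, f, -, hfy⟩
  set P := FormalMultilinearSeries.ofScalars ℂ a with hP
  have hP0 : P ≠ 0 := by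
    obtain ⟨n, hn⟩ := hy0
    rw [hP, Ne, FormalMultilinearSeries.ofScalars_series_eq_zero]
    rintro rfl
    simp [hy] at hn
  have l_mem_closure : l ∈ closure (Metric.ball (0 : ℂ) ‖l‖) := by
    simp [closure_ball (0 : ℂ) (norm_ne_zero_iff.2 hl0)]
  have ball_subset : Metric.ball (0 : ℂ) ‖l‖ ⊆ Metric.eball 0 P.radius := by
    rw [← coe_nnnorm, ← Metric.eball_coe]
    exact Metric.eball_subset_eball hl
  obtain ⟨m, ⟨hmU, hmR⟩, hsum⟩ := exists_mem_sum_ne_zero hP0 hU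
    ((mem_closure_iff.1 l_mem_closure U hU hlU).mono (Set.inter_subset_inter_right U ball_subset))
  have specRad_le : localSpecRad T z ≤ ‖m‖₊ :=
    h.localSpecRad_le_of_tendsto hy (hfy m hmU) hsum (tendsto_sum_range_ofScalars hmR)
  have m_lt : (‖m‖₊ : ℝ≥0∞) < P.radius := by simpa [enorm_eq_nnnorm] using hmR
  exact (m_lt.trans_le (hR.trans specRad_le)).false

section LpCoordinates

variable {𝕜 ι : Type*} [NontriviallyNormedField 𝕜] {E : ι → Type*}
  [∀ i, NormedAddCommGroup (E i)] [∀ i, NormedSpace 𝕜 (E i)] {p : ℝ≥0∞} [Fact (1 ≤ p)]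
  [DecidableEq ι]

variable (𝕜 E p) in
/-- The projection of an `ℓᵖ` direct sum onto its `i`-th summand, as an operator on the sum. -/
def lpCoord (i : ι) : lp E p →L[𝕜] lp E p :=
  lp.singleContinuousLinearMap 𝕜 E p i ∘L lp.evalCLM 𝕜 E p i

theorem lpCoord_apply (i : ι) (y : lp E p) : lpCoord 𝕜 E p i y = lp.single p i (y i) := rfl

theorem exists_lpCoord_ne_zero {y : lp E p} (hy : y ≠ 0) : ∃ i, lpCoord 𝕜 E p i y ≠ 0 := by
  contrapose! hy
  ext i
  have single_eq_zero : lp.single p i (y i) = 0 := hy i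
  rw [← lp.single_apply_self p i (y i), single_eq_zero]

theorem apply_mem_span_of_mem_topologicalClosure_span_single [CompleteSpace 𝕜] {v : ∀ i, E i}
    {y : lp E p}
    (hy : y ∈ (Submodule.span 𝕜 (Set.range fun i => lp.single p i (v i))).topologicalClosure)
    (i : ι) : y i ∈ Submodule.span 𝕜 {v i} := by
  let M := (Submodule.span 𝕜 {v i}).comap (lp.evalCLM 𝕜 E p i).toLinearMap
  have isClosed_M : IsClosed (M : Set (lp E p)) :=
    (Submodule.closed_of_finiteDimensional (Submodule.span 𝕜 {v i})).preimage
      (lp.evalCLM 𝕜 E p i).continuous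
  have span_le : Submodule.span 𝕜 (Set.range fun i => lp.single p i (v i)) ≤ M := by
    rw [Submodule.span_le]
    rintro _ ⟨j, rfl⟩
    change lp.single p j (v j) i ∈ Submodule.span 𝕜 {v i}
    rcases eq_or_ne i j with rfl | hij
    · rw [lp.single_apply_self]
      exact Submodule.mem_span_singleton_self _
    · rw [lp.single_apply_ne _ _ _ hij]
      exact Submodule.zero_mem _
  exact Submodule.topologicalClosure_minimal _ span_le isClosed_M hy

end LpCoordinates

section LpShift

variable {𝕜 : Type*} [NontriviallyNormedField 𝕜] {E : ℕ → Type*}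
  [∀ n, NormedAddCommGroup (E n)] [∀ n, NormedSpace 𝕜 (E n)] {p : ℝ≥0∞} [Fact (1 ≤ p)]
  {W : ∀ n, E n →L[𝕜] E (n + 1)} {S : lp E p →L[𝕜] lp E p}

theorem shift_single (hS0 : ∀ w, S w 0 = 0) (hS : ∀ w n, S w (n + 1) = W n (w n))
    (n : ℕ) (v : E n) : S (lp.single p n v) = lp.single p (n + 1) (W n v) := by
  ext k
  cases k with
  | zero => rw [hS0, lp.single_apply_ne _ _ _ n.succ_ne_zero.symm]
  | succ k =>
    rw [hS]
    rcases eq_or_ne k n with rfl | hkn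
    · rw [lp.single_apply_self, lp.single_apply_self]
    · rw [lp.single_apply_ne _ _ _ hkn, map_zero,
        lp.single_apply_ne _ _ _ (Nat.succ_injective.ne hkn)]

theorem isShiftAlong_lpCoord (hS0 : ∀ w, S w 0 = 0) (hS : ∀ w n, S w (n + 1) = W n (w n)) :
    IsShiftAlong S (lpCoord 𝕜 E p) where
  coord_zero w := by rw [lpCoord_apply, hS0, lp.single_zero]
  coord_succ n w := by rw [lpCoord_apply, lpCoord_apply, hS, shift_single hS0 hS]
  bddAbove_norm_coord w := by
    have hp : 0 < p := zero_lt_one.trans_le Fact.out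
    refine ⟨‖w‖, ?_⟩
    rintro _ ⟨n, rfl⟩
    change ‖lp.single p n (w n)‖ ≤ ‖w‖
    rw [lp.norm_single hp]
    exact lp.norm_apply_le_norm hp.ne' w n

end LpShift

section WeightedShift

variable {H : Type*} [NormedAddCommGroup H] [InnerProductSpace ℂ H]
  {A : ℕ → (H →L[ℂ] H)ˣ} {x : H} {y : lp (fun _ : ℕ => H) 2}

theorem wBi_wB_apply (A : ℕ → (H →L[ℂ] H)ˣ) (n : ℕ) (v : H) :
    wBi A n ((wB A n : H →L[ℂ] H) v) = v :=
  DFunLike.congr_fun (wB A n).inv_mul v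

theorem RA_eq_radius_ofScalars (hx : x ≠ 0) {a : ℕ → ℂ}
    (ha : ∀ n, y n = a n • (wB A n : H →L[ℂ] H) x) :
    RA A y = (FormalMultilinearSeries.ofScalars ℂ a).radius := by
  rw [radius_ofScalars_eq_inv_limsup_nnnorm_smul a hx, RA]
  simp only [ha, map_smul, wBi_wB_apply]

theorem exists_eq_smul_wB_apply
    (hy : y ∈ (Submodule.span ℂ
      (Set.range fun n : ℕ => lp.single 2 n ((wB A n : H →L[ℂ] H) x))).topologicalClosure) :
    ∃ a : ℕ → ℂ, ∀ n, y n = a n • (wB A n : H →L[ℂ] H) x := by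
  choose a ha using fun n => Submodule.mem_span_singleton.1
    (apply_mem_span_of_mem_topologicalClosure_span_single hy n)
  exact ⟨a, fun n => (ha n).symm⟩

theorem pow_shift_single_zero {S : lp (fun _ : ℕ => H) 2 →L[ℂ] lp (fun _ : ℕ => H) 2}
    (hS0 : ∀ w, S w 0 = 0) (hS : ∀ w n, S w (n + 1) = (A n : H →L[ℂ] H) (w n))
    (x : H) (n : ℕ) :
    (S ^ n) (lp.single 2 0 x) = lp.single 2 n ((wB A n : H →L[ℂ] H) x) := by
  induction n with
  | zero => rfl
  | succ n ih =>
    rw [pow_succ', mul_apply_eq_comp, ih, shift_single hS0 hS]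
    rfl

end WeightedShift

theorem stmt17 {H : Type*} [NormedAddCommGroup H] [InnerProductSpace ℂ H] [CompleteSpace H]
    (A : ℕ → (H →L[ℂ] H)ˣ)
    (hbdd : ∃ C : ℝ, ∀ n, ‖(A n : H →L[ℂ] H)‖ ≤ C)
    (S : lp (fun _ : ℕ => H) 2 →L[ℂ] lp (fun _ : ℕ => H) 2)
    (hS0 : ∀ x : lp (fun _ : ℕ => H) 2, S x 0 = 0)
    (hS : ∀ (x : lp (fun _ : ℕ => H) 2) (n : ℕ), S x (n + 1) = (A n : H →L[ℂ] H) (x n))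
    (x : H) (hx : x ≠ 0) (y : lp (fun _ : ℕ => H) 2) (hy0 : y ≠ 0)
    (hy : y ∈ (Submodule.span ℂ
      (Set.range fun n : ℕ => lp.single 2 n ((wB A n : H →L[ℂ] H) x))).topologicalClosure)
    (hR : RA A y ≤ localSpecRad S (lp.single 2 0 x)) :
    {l : ℂ | (‖l‖₊ : ℝ≥0∞) ≤ RA A y} ⊆ localSpectrum S y := by
  obtain ⟨a, ha⟩ := exists_eq_smul_wB_apply hy
  have coord_y (n : ℕ) : lpCoord ℂ (fun _ : ℕ => H) 2 n y = a n • (S ^ n) (lp.single 2 0 x) := by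
    rw [pow_shift_single_zero hS0 hS, lpCoord_apply, ha, lp.single_smul]
  rw [RA_eq_radius_ofScalars hx ha] at hR ⊢
  exact stmt17_general (isShiftAlong_lpCoord hS0 hS) coord_y (exists_lpCoord_ne_zero hy0) hR
end
end
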